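/- Let N be an even positive integer and p an integer with 2 ≤ p ≤ N/2; assume u^p[2n]² + v^p[2n]² > 0 for every n. Define the first-level complementary wavelet packets φ_{[1],λ}^p = C(ψ_{[1],λ}^p), λ = 0,1. Then the N signals {φ_{[1],0}^p[·−2l] : 0 ≤ l < N/2} ∪ {φ_{[1],1}^p[·−2l] : 0 ≤ l < N/2} form an orthonormal basis of Π[N]; consequently, for λ ∈ {0,1}, the orthogonal projection of any x ∈ Π[N] onto span{φ_{[1],λ}^p[·−2l] : 0 ≤ l < N/2} equals Σ_{l=0}^{N/2−1} ⟨x, φ_{[1],λ}^p[·−2l]⟩·φ_{[1],λ}^p[·−2l]. -/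

import Mathlib

open MeasureTheory

namespace WP

/-- The root of unity ω = e^{2πi/N}. -/
noncomputable def ww (N : ℕ) : ℂ := Complex.exp (2 * Real.pi * Complex.I / N)

/-- DFT of a signal `x ∈ Π[N]`: x̂[n] = Σ_{k=0}^{N−1} ω^{−kn} x[k]. -/
noncomputable def dft (N : ℕ) (x : ℤ → ℂ) (n : ℤ) : ℂ :=
  ∑ k ∈ Finset.range N, ww N ^ (-((k : ℤ) * n)) * x k

/-- Inner product on `Π[N]`. -/
noncomputable def inner1 (N : ℕ) (x y : ℤ → ℂ) : ℂ :=
  ∑ k ∈ Finset.range N, x k * (starRingEnd ℂ) (y k)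

/-- The discrete periodic Hilbert transform, defined via the DFT:
    Ĥ(x)[n] = −i·x̂[n] for 0<n<N/2, i·x̂[n] for N/2<n<N, 0 at n=0 and n=N/2. -/
noncomputable def hilbertT (N : ℕ) (x : ℤ → ℂ) (k : ℤ) : ℂ :=
  (N : ℂ)⁻¹ * ∑ n ∈ Finset.range N,
    (if 0 < n ∧ n < N / 2 then -Complex.I else if N / 2 < n ∧ n < N then Complex.I else 0) *
      dft N x n * ww N ^ ((k * (n : ℤ)))

/-- The complementary-WP operator `C`, defined via the DFT:
    Ĉ(x)[n] = −i·x̂[n] for 0<n<N/2, i·x̂[n] for N/2<n<N, x̂[0] at 0, x̂[N/2] at N/2. -/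
noncomputable def cwpT (N : ℕ) (x : ℤ → ℂ) (k : ℤ) : ℂ :=
  (N : ℂ)⁻¹ * ∑ n ∈ Finset.range N,
    (if n = 0 ∨ n = N / 2 then 1 else if n < N / 2 then -Complex.I else Complex.I) *
      dft N x n * ww N ^ ((k * (n : ℤ)))

/-- The order-p B-spline b^p(t). -/
noncomputable def bspline (p : ℕ) (t : ℝ) : ℝ :=
  (1 / (Nat.factorial (p - 1) : ℝ)) *
    ∑ k ∈ Finset.range (p + 1),
      (-1 : ℝ) ^ k * (p.choose k : ℝ) * max (t + (p : ℝ) / 2 - (k : ℝ)) 0 ^ (p - 1)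

/-- u^p[n] = Σ_{k=−N/2}^{N/2−1} ω^{−kn} b^p(k). -/
noncomputable def uSeq (N p : ℕ) (n : ℤ) : ℂ :=
  ∑ k ∈ Finset.range N,
    ww N ^ (-(((k : ℤ) - (N : ℤ) / 2) * n)) * (bspline p ((k : ℝ) - (N : ℝ) / 2) : ℂ)

/-- v^p[n] = e^{−πin/N} Σ_{k=−N/2}^{N/2−1} ω^{−kn} b^p(k+1/2). -/
noncomputable def vSeq (N p : ℕ) (n : ℤ) : ℂ :=
  Complex.exp (-Real.pi * Complex.I * n / N) *
    ∑ k ∈ Finset.range N,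
      ww N ^ (-(((k : ℤ) - (N : ℤ) / 2) * n)) *
        (bspline p ((k : ℝ) - (N : ℝ) / 2 + 1 / 2) : ℂ)

/-- The span-two discrete-time B-spline b_{[1]}^p ∈ Π[N]:
    the N-periodic signal with b_{[1]}^p[k] = b^p(k/2)/2 for −N/2 ≤ k ≤ N/2−1. -/
noncomputable def bs1 (N p : ℕ) (k : ℤ) : ℂ :=
  ((bspline p ((((k + (N : ℤ) / 2) % (N : ℤ) - (N : ℤ) / 2 : ℤ) : ℝ) / 2) : ℝ) : ℂ) / 2

/-- Its DFT b̂_{[1]}^p[n] = Σ_{k=−N/2}^{N/2−1} ω^{−kn} b_{[1]}^p[k]. -/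
noncomputable def bhat1 (N p : ℕ) (n : ℤ) : ℂ :=
  ∑ k ∈ Finset.range N,
    ww N ^ (-(((k : ℤ) - (N : ℤ) / 2) * n)) * bs1 N p ((k : ℤ) - (N : ℤ) / 2)

/-- Υ^p[n] = (u^p[2n]² + v^p[2n]²)/4. -/
noncomputable def upsilon (N p : ℕ) (n : ℤ) : ℂ :=
  (uSeq N p (2 * n) ^ 2 + vSeq N p (2 * n) ^ 2) / 4

/-- β[n] = b̂_{[1]}^p[n] / √(Υ^p[n]). -/
noncomputable def betaS (N p : ℕ) (n : ℤ) : ℂ := bhat1 N p n / upsilon N p n ^ ((1 : ℂ) / 2)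

/-- α[n] = ω^n · β[n+N/2]. -/
noncomputable def alphaS (N p : ℕ) (n : ℤ) : ℂ := ww N ^ n * betaS N p (n + (N : ℤ) / 2)

/-- The first-level wavelet packets ψ_{[1],λ}^p, λ = 0,1, defined via their DFTs
    ψ̂_{[1],0}^p[n] = β[n] and ψ̂_{[1],1}^p[n] = α[n]. -/
noncomputable def psi1 (N p lam : ℕ) (k : ℤ) : ℂ :=
  (N : ℂ)⁻¹ * ∑ n ∈ Finset.range N,
    (if lam = 0 then betaS N p n else alphaS N p n) * ww N ^ ((k * (n : ℤ)))


open scoped ComplexOrder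

section RootsOfUnity

variable {N : ℕ}

lemma ww_ne_zero : ww N ≠ 0 := Complex.exp_ne_zero _

lemma isPrimitiveRoot_ww (hN : N ≠ 0) : IsPrimitiveRoot (ww N) N :=
  Complex.isPrimitiveRoot_exp N hN

lemma conj_ww : (starRingEnd ℂ) (ww N) = (ww N)⁻¹ := by
  simp [ww, ← Complex.exp_conj, ← Complex.exp_neg, neg_div, map_ofNat (starRingEnd ℂ)]

lemma conj_ww_zpow (j : ℤ) : (starRingEnd ℂ) (ww N ^ j) = ww N ^ (-j) := by
  rw [map_zpow₀, conj_ww, inv_zpow']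

lemma ww_zpow_mul_eq_one (hN : N ≠ 0) (j : ℤ) : ww N ^ ((N : ℤ) * j) = 1 :=
  ((isPrimitiveRoot_ww hN).zpow_eq_one_iff_dvd _).2 (dvd_mul_right _ _)

lemma ww_zpow_half {M : ℕ} (hM : M ≠ 0) : ww (M + M) ^ (M : ℤ) = -1 := by
  have h : (M : ℂ) ≠ 0 := by exact_mod_cast hM
  rw [ww, ← Complex.exp_int_mul, ← Complex.exp_pi_mul_I]
  congr 1
  push_cast
  field_simp
  ring

/-- Orthogonality of the characters of `ℤ/N`. -/
lemma sum_ww_zpow (hN : N ≠ 0) (j : ℤ) :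
    ∑ k ∈ Finset.range N, ww N ^ ((k : ℤ) * j) = if (N : ℤ) ∣ j then (N : ℂ) else 0 := by
  have hp := isPrimitiveRoot_ww hN
  have hpow : ∀ k : ℕ, ww N ^ ((k : ℤ) * j) = (ww N ^ j) ^ k := fun k => by
    rw [mul_comm, zpow_mul, zpow_natCast]
  simp only [hpow]
  split_ifs with h
  · simp [(hp.zpow_eq_one_iff_dvd j).2 h]
  · have h1 : ww N ^ j ≠ 1 := fun e => h ((hp.zpow_eq_one_iff_dvd j).1 e)
    rw [geom_sum_eq h1, ← hpow, ww_zpow_mul_eq_one hN, sub_self, zero_div]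

/-- The inverse DFT. -/
noncomputable def synth (N : ℕ) (f : ℕ → ℂ) (k : ℤ) : ℂ :=
  (N : ℂ)⁻¹ * ∑ n ∈ Finset.range N, f n * ww N ^ (k * (n : ℤ))

lemma natCast_dvd_sub_iff {m n : ℕ} (hm : m < N) (hn : n < N) :
    (N : ℤ) ∣ (m : ℤ) - n ↔ m = n := by
  constructor
  · intro h
    have := Int.eq_zero_of_abs_lt_dvd h (by rw [abs_lt]; omega)
    omega
  · rintro rfl
    simp

lemma dft_synth (hN : N ≠ 0) (f : ℕ → ℂ) {n : ℕ} (hn : n < N) :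
    dft N (synth N f) n = f n := by
  have hNC : (N : ℂ) ≠ 0 := by exact_mod_cast hN
  have step : ∀ k : ℕ, ww N ^ (-((k : ℤ) * n)) * synth N f k =
      ∑ m ∈ Finset.range N, (N : ℂ)⁻¹ * f m * ww N ^ ((k : ℤ) * ((m : ℤ) - n)) := fun k => by
    rw [synth, Finset.mul_sum, Finset.mul_sum]
    refine Finset.sum_congr rfl fun m _ => ?_
    rw [mul_sub, sub_eq_add_neg, zpow_add₀ ww_ne_zero]
    ring
  simp only [dft, step]
  rw [Finset.sum_comm]
  simp only [← Finset.mul_sum, sum_ww_zpow hN]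
  rw [Finset.sum_eq_single n]
  · simp
    field_simp
  · intro m hm hmn
    rw [if_neg, mul_zero]
    rwa [natCast_dvd_sub_iff (Finset.mem_range.1 hm) hn]
  · simp [hn]

/-- Parseval's identity for shifted signals. -/
lemma inner1_synth_shift (hN : N ≠ 0) (f g : ℕ → ℂ) (a b : ℤ) :
    inner1 N (fun k => synth N f (k - a)) (fun k => synth N g (k - b)) =
      (N : ℂ)⁻¹ * ∑ n ∈ Finset.range N,
        f n * (starRingEnd ℂ) (g n) * ww N ^ ((b - a) * (n : ℤ)) := by
  have hNC : (N : ℂ) ≠ 0 := by exact_mod_cast hN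
  have step : ∀ k : ℕ,
      synth N f (k - a) * (starRingEnd ℂ) (synth N g (k - b)) =
        ∑ n ∈ Finset.range N, ∑ m ∈ Finset.range N,
          (N : ℂ)⁻¹ * (N : ℂ)⁻¹ * (f n * (starRingEnd ℂ) (g m) * ww N ^ (b * m - a * n)) *
            ww N ^ ((k : ℤ) * ((n : ℤ) - m)) := fun k => by
    simp only [synth, map_mul, map_sum, conj_ww_zpow, map_inv₀, map_natCast]
    rw [mul_mul_mul_comm, Finset.sum_mul_sum, Finset.mul_sum]
    refine Finset.sum_congr rfl fun n _ => ?_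
    rw [Finset.mul_sum]
    refine Finset.sum_congr rfl fun m _ => ?_
    have e : ww N ^ ((↑k - a) * (n : ℤ)) * ww N ^ (-((↑k - b) * (m : ℤ))) =
        ww N ^ (b * m - a * n) * ww N ^ ((k : ℤ) * ((n : ℤ) - m)) := by
      rw [← zpow_add₀ ww_ne_zero, ← zpow_add₀ ww_ne_zero]
      congr 1
      ring
    linear_combination (N : ℂ)⁻¹ * (N : ℂ)⁻¹ * f n * (starRingEnd ℂ) (g m) * e
  simp only [inner1, step]
  rw [Finset.sum_comm, Finset.mul_sum]
  refine Finset.sum_congr rfl fun n hn => ?_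
  rw [Finset.sum_comm]
  simp only [← Finset.mul_sum, sum_ww_zpow hN]
  rw [Finset.sum_eq_single n]
  · rw [sub_self, if_pos (dvd_zero _), sub_mul]
    field_simp
  · intro m hm hmn
    rw [if_neg, mul_zero]
    rw [natCast_dvd_sub_iff (Finset.mem_range.1 hn) (Finset.mem_range.1 hm)]
    exact hmn.symm
  · exact fun h => absurd hn h

/-- Two-sample shifts of signals whose DFTs satisfy `f[n] conj g[n] + f[n+M] conj g[n+M] = 2c`
are orthonormal up to the factor `c`. -/
lemma inner1_synth_two_shift {M : ℕ} (hM : M ≠ 0) (f g : ℕ → ℂ) (c : ℂ)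
    (h : ∀ n < M, f n * (starRingEnd ℂ) (g n) + f (M + n) * (starRingEnd ℂ) (g (M + n)) = 2 * c)
    {l m : ℕ} (hl : l < M) (hm : m < M) :
    inner1 (M + M) (fun k => synth (M + M) f (k - 2 * (l : ℤ)))
      (fun k => synth (M + M) g (k - 2 * (m : ℤ))) = if l = m then c else 0 := by
  have hN : M + M ≠ 0 := by omega
  have hMC : (M : ℂ) ≠ 0 := by exact_mod_cast hM
  have hsum : ∑ n ∈ Finset.range M, 2 * c * ww (M + M) ^ ((n : ℤ) * (2 * m - 2 * l)) =
      if l = m then 2 * c * M else 0 := by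
    have hsq : ww (M + M) ^ 2 = ww M := by
      rw [ww, ww, ← Complex.exp_nat_mul]
      congr 1
      push_cast
      field_simp
      ring
    have e : ∀ n : ℕ, ww (M + M) ^ ((n : ℤ) * (2 * m - 2 * l)) =
        ww M ^ ((n : ℤ) * ((m : ℤ) - l)) := fun n => by
      rw [← hsq, ← zpow_natCast, ← zpow_mul]
      congr 1
      push_cast
      ring
    simp only [e]
    rw [← Finset.mul_sum, sum_ww_zpow hM]
    simp only [natCast_dvd_sub_iff hm hl, mul_ite, mul_zero, eq_comm]
  rw [inner1_synth_shift hN, Finset.sum_range_add, ← Finset.sum_add_distrib]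
  have : ∀ n ∈ Finset.range M,
      f n * (starRingEnd ℂ) (g n) * ww (M + M) ^ ((2 * (m : ℤ) - 2 * (l : ℤ)) * (n : ℤ)) +
        f (M + n) * (starRingEnd ℂ) (g (M + n)) *
          ww (M + M) ^ ((2 * (m : ℤ) - 2 * (l : ℤ)) * ((M + n : ℕ) : ℤ)) =
      2 * c * ww (M + M) ^ ((n : ℤ) * (2 * m - 2 * l)) := fun n hn => by
    have e : (2 * (m : ℤ) - 2 * (l : ℤ)) * ((M + n : ℕ) : ℤ) =
        ((M + M : ℕ) : ℤ) * (m - l) + (n : ℤ) * (2 * m - 2 * l) := by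
      push_cast
      ring
    rw [e, zpow_add₀ ww_ne_zero, ww_zpow_mul_eq_one hN, mul_comm (2 * (m : ℤ) - _)]
    linear_combination (ww (M + M) ^ ((n : ℤ) * (2 * m - 2 * l))) * h n (Finset.mem_range.1 hn)
  rw [Finset.sum_congr rfl this, hsum]
  split_ifs
  · push_cast
    field_simp
    ring
  · simp

end RootsOfUnity

section BSpline

lemma sum_choose_mul_sub_pow_eq_zero {p : ℕ} (hp : 1 ≤ p) (s : ℝ) :
    ∑ k ∈ Finset.range (p + 1), (-1 : ℝ) ^ k * (p.choose k : ℝ) * (s - k) ^ (p - 1) = 0 := by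
  have hdeg : ((Polynomial.C s - Polynomial.X) ^ (p - 1) : Polynomial ℝ).natDegree < p := by
    have h1 : (Polynomial.C s - Polynomial.X : Polynomial ℝ).natDegree ≤ 1 := by compute_degree
    have := Polynomial.natDegree_pow_le_of_le (p - 1) h1
    omega
  have h := congrFun (Polynomial.fwdDiff_iter_eq_zero_of_degree_lt hdeg) 0
  rw [fwdDiff_iter_eq_sum_shift] at h
  have h2 : (-1 : ℝ) ^ p *
      ∑ k ∈ Finset.range (p + 1), (-1 : ℝ) ^ k * (p.choose k : ℝ) * (s - k) ^ (p - 1) = 0 := by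
    rw [Finset.mul_sum, ← Pi.zero_apply (M := fun _ : ℝ => ℝ) 0, ← h]
    refine Finset.sum_congr rfl fun k hk => ?_
    have hk' : k ≤ p := by simpa [Nat.lt_succ_iff] using hk
    have e : (-1 : ℝ) ^ p = (-1) ^ (p - k) * (-1) ^ k := by rw [← pow_add, Nat.sub_add_cancel hk']
    have e2 : ((-1 : ℝ) ^ k) * (-1) ^ k = 1 := by rw [← mul_pow]; simp
    simp [e]
    linear_combination ((-1 : ℝ) ^ (p - k) * (p.choose k : ℝ) * (s - k) ^ (p - 1)) * e2
  exact (mul_eq_zero.1 h2).resolve_left (by simp)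

lemma bspline_neg {p : ℕ} (hp : 2 ≤ p) (t : ℝ) : bspline p (-t) = bspline p t := by
  have htrunc : ∀ y : ℝ, max (-y) 0 ^ (p - 1) =
      (-1 : ℝ) ^ (p - 1) * (y ^ (p - 1) - max y 0 ^ (p - 1)) := fun y => by
    have h0 : (0 : ℝ) ^ (p - 1) = 0 := zero_pow (by omega)
    rcases le_total y 0 with hy | hy
    · rw [max_eq_left (by linarith), max_eq_right hy, h0, sub_zero, ← mul_pow]
      simp
    · rw [max_eq_right (by linarith), max_eq_left hy, h0, sub_self, mul_zero]
  have hz := sum_choose_mul_sub_pow_eq_zero (show 1 ≤ p by omega) (t + p / 2)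
  unfold bspline
  congr 1
  rw [← Finset.sum_range_reflect]
  refine (sub_eq_zero.1 (Eq.trans ?_ hz)).symm
  rw [← Finset.sum_sub_distrib]
  refine Finset.sum_congr rfl fun k hk => ?_
  have hk' : k ≤ p := by simpa [Nat.lt_succ_iff] using hk
  have e1 : p + 1 - 1 - k = p - k := by omega
  have e2 : -t + (p : ℝ) / 2 - ((p - k : ℕ) : ℝ) = -(t + p / 2 - k) := by
    rw [Nat.cast_sub hk']
    ring
  have e3 : (-1 : ℝ) ^ (p - k) * (-1) ^ (p - 1) = -(-1) ^ k := by
    have : p - k + (p - 1) + (k + 1) = 2 * p := by omega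
    have h1 : ((-1 : ℝ) ^ (p - k) * (-1) ^ (p - 1)) * (-1) ^ (k + 1) = 1 := by
      rw [← pow_add, ← pow_add, this, pow_mul]
      simp
    have h2 : (-1 : ℝ) ^ k * (-1) ^ k = 1 := by rw [← mul_pow]; simp
    rw [pow_succ] at h1
    linear_combination (-(-1 : ℝ) ^ k) * h1 - (-1 : ℝ) ^ (p - k) * (-1) ^ (p - 1) * h2
  rw [e1, e2, htrunc, Nat.choose_symm hk']
  linear_combination (-(p.choose k : ℝ) *
    ((t + p / 2 - k) ^ (p - 1) - max (t + p / 2 - k) 0 ^ (p - 1))) * e3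

lemma bspline_eq_zero {p : ℕ} (hp : 2 ≤ p) {t : ℝ} (ht : (p : ℝ) / 2 ≤ |t|) :
    bspline p t = 0 := by
  have key : ∀ s : ℝ, s ≤ -(p / 2) → bspline p s = 0 := fun s hs => by
    rw [bspline, Finset.sum_eq_zero, mul_zero]
    intro k _
    have : (0 : ℝ) ≤ k := Nat.cast_nonneg k
    rw [max_eq_right (by linarith), zero_pow (by omega), mul_zero]
  rcases le_abs.1 ht with h | h
  · rw [← bspline_neg hp]
    exact key _ (by linarith)
  · exact key _ (by linarith)

end BSpline

lemma sum_range_sub_eq_sum_Ico {α : Type*} [AddCommMonoid α] (L : ℕ) (f : ℤ → α) :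
    ∑ i ∈ Finset.range (L + L), f ((i : ℤ) - L) = ∑ k ∈ Finset.Ico (-(L : ℤ)) L, f k := by
  refine Finset.sum_bij (fun i _ => (i : ℤ) - L) ?_ ?_ ?_ (fun _ _ => rfl)
  · intro i hi
    simp only [Finset.mem_range, Finset.mem_Ico] at hi ⊢
    omega
  · intro i _ j _ h
    omega
  · intro k hk
    simp only [Finset.mem_Ico] at hk
    exact ⟨(k + L).toNat, by simp only [Finset.mem_range]; omega, by omega⟩

lemma sum_range_add_self {α : Type*} [AddCommMonoid α] (f : ℕ → α) (n : ℕ) :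
    ∑ i ∈ Finset.range (n + n), f i = ∑ i ∈ Finset.range n, (f (2 * i) + f (2 * i + 1)) := by
  induction n with
  | zero => simp
  | succ n ih =>
    rw [show n + 1 + (n + 1) = n + n + 1 + 1 by ring, Finset.sum_range_succ,
      Finset.sum_range_succ, ih, Finset.sum_range_succ, add_assoc, two_mul]

section WaveletPackets

variable {M p : ℕ}

lemma bhat1_eq_sum_Ico (n : ℤ) :
    bhat1 (M + M) p n = ∑ k ∈ Finset.Ico (-(M : ℤ)) M,
      ww (M + M) ^ (-(k * n)) * ((bspline p ((k : ℝ) / 2) : ℂ) / 2) := by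
  have h2 : ((M + M : ℕ) : ℤ) / 2 = M := by omega
  rw [← sum_range_sub_eq_sum_Ico, bhat1]
  refine Finset.sum_congr rfl fun k hk => ?_
  have hk' := Finset.mem_range.1 hk
  rw [bs1, h2, sub_add_cancel, Int.emod_eq_of_lt (by omega) (by omega)]

lemma bspline_half_eq_zero (hp : 2 ≤ p) (hpM : p ≤ M) {k : ℤ} (hk : (M : ℤ) ≤ |k|) :
    bspline p ((k : ℝ) / 2) = 0 := by
  apply bspline_eq_zero hp
  have h1 : (p : ℝ) ≤ M := by exact_mod_cast hpM
  have h2 : (M : ℝ) ≤ |(k : ℝ)| := by exact_mod_cast hk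
  rw [abs_div, abs_two]
  linarith

lemma conj_bhat1 (hp : 2 ≤ p) (hpM : p ≤ M) (n : ℤ) :
    (starRingEnd ℂ) (bhat1 (M + M) p n) = bhat1 (M + M) p n := by
  have hIcc : bhat1 (M + M) p n = ∑ k ∈ Finset.Icc (-(M : ℤ)) M,
      ww (M + M) ^ (-(k * n)) * ((bspline p ((k : ℝ) / 2) : ℂ) / 2) := by
    rw [bhat1_eq_sum_Ico]
    refine Finset.sum_subset Finset.Ico_subset_Icc_self fun k hk hk' => ?_
    simp only [Finset.mem_Icc, Finset.mem_Ico] at hk hk'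
    rw [bspline_half_eq_zero hp hpM (by rw [le_abs]; omega)]
    simp
  rw [hIcc, map_sum]
  refine Finset.sum_bij' (fun k _ => -k) (fun k _ => -k) ?_ ?_ (by simp) (by simp) ?_
  · intro k hk
    simp only [Finset.mem_Icc] at hk ⊢
    omega
  · intro k hk
    simp only [Finset.mem_Icc] at hk ⊢
    omega
  · intro k _
    have e : bspline p (((-k : ℤ) : ℝ) / 2) = bspline p ((k : ℝ) / 2) := by
      rw [← bspline_neg hp]
      congr 1
      push_cast
      ring
    rw [e, map_mul, conj_ww_zpow, neg_mul]
    simp [map_ofNat (starRingEnd ℂ)]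

lemma bhat1_eq (hp : 2 ≤ p) (hpM : p ≤ M) (n : ℤ) :
    bhat1 (M + M) p n = (uSeq (M + M) p (2 * n) + vSeq (M + M) p (2 * n)) / 2 := by
  have hM : (M : ℂ) ≠ 0 := by
    have : M ≠ 0 := by omega
    exact_mod_cast this
  have h2 : ((M + M : ℕ) : ℤ) / 2 = M := by omega
  have h2' : ((M + M : ℕ) : ℝ) / 2 = M := by push_cast; ring
  have hext : bhat1 (M + M) p n = ∑ k ∈ Finset.Ico (-((M + M : ℕ) : ℤ)) (M + M : ℕ),
      ww (M + M) ^ (-(k * n)) * ((bspline p ((k : ℝ) / 2) : ℂ) / 2) := by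
    rw [bhat1_eq_sum_Ico]
    refine Finset.sum_subset (Finset.Ico_subset_Ico (by omega) (by omega)) fun k hk hk' => ?_
    simp only [Finset.mem_Ico] at hk hk'
    rw [bspline_half_eq_zero hp hpM (by rw [le_abs]; omega)]
    simp
  have hexp : Complex.exp (-Real.pi * Complex.I * ((2 * n : ℤ) : ℂ) / ((M + M : ℕ) : ℂ)) =
      ww (M + M) ^ (-n) := by
    rw [ww, ← Complex.exp_int_mul]
    congr 1
    push_cast
    field_simp
  rw [hext, ← sum_range_sub_eq_sum_Ico, sum_range_add_self, Finset.sum_add_distrib, uSeq, vSeq,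
    hexp, add_div, Finset.mul_sum, Finset.sum_div, Finset.sum_div, h2, h2']
  congr 1
  · refine Finset.sum_congr rfl fun j _ => ?_
    have e1 : -((((2 * j : ℕ) : ℤ) - ((M + M : ℕ) : ℤ)) * n) = -(((j : ℤ) - M) * (2 * n)) := by
      push_cast
      ring
    have e2 : (((((2 * j : ℕ) : ℤ) - ((M + M : ℕ) : ℤ) : ℤ)) : ℝ) / 2 = (j : ℝ) - M := by
      push_cast
      ring
    rw [e1, e2, mul_div_assoc]
  · refine Finset.sum_congr rfl fun j _ => ?_
    have e1 : -((((2 * j + 1 : ℕ) : ℤ) - ((M + M : ℕ) : ℤ)) * n) =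
        -n + -(((j : ℤ) - M) * (2 * n)) := by
      push_cast
      ring
    have e2 : (((((2 * j + 1 : ℕ) : ℤ) - ((M + M : ℕ) : ℤ) : ℤ)) : ℝ) / 2 =
        (j : ℝ) - M + 1 / 2 := by
      push_cast
      ring
    rw [e1, e2, zpow_add₀ ww_ne_zero]
    ring

lemma ww_zpow_add_period (hM : M ≠ 0) (a k n : ℤ) :
    ww (M + M) ^ (-((k - a) * (2 * (n + M)))) = ww (M + M) ^ (-((k - a) * (2 * n))) := by
  have e : -((k - a) * (2 * (n + M))) =
      ((M + M : ℕ) : ℤ) * (-(k - a)) + -((k - a) * (2 * n)) := by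
    push_cast
    ring
  rw [e, zpow_add₀ ww_ne_zero, ww_zpow_mul_eq_one (by omega), one_mul]

lemma uSeq_add_half (hM : M ≠ 0) (n : ℤ) :
    uSeq (M + M) p (2 * (n + M)) = uSeq (M + M) p (2 * n) := by
  simp only [uSeq, ww_zpow_add_period hM]

lemma vSeq_add_half (hM : M ≠ 0) (n : ℤ) :
    vSeq (M + M) p (2 * (n + M)) = -vSeq (M + M) p (2 * n) := by
  have hMC : (M : ℂ) ≠ 0 := by exact_mod_cast hM
  have e : -(Real.pi : ℂ) * Complex.I * ((2 * (n + M) : ℤ) : ℂ) / ((M + M : ℕ) : ℂ) =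
      -Real.pi * Complex.I * ((2 * n : ℤ) : ℂ) / ((M + M : ℕ) : ℂ) - Real.pi * Complex.I := by
    push_cast
    field_simp
    ring
  simp only [vSeq, ww_zpow_add_period hM]
  rw [e, Complex.exp_sub, Complex.exp_pi_mul_I]
  ring

lemma upsilon_add_half (hM : M ≠ 0) (n : ℤ) :
    upsilon (M + M) p (n + M) = upsilon (M + M) p n := by
  rw [upsilon, upsilon, uSeq_add_half hM, vSeq_add_half hM, neg_sq]

lemma betaS_add_period (hp : 2 ≤ p) (hpM : p ≤ M) (n : ℤ) :
    betaS (M + M) p (n + M + M) = betaS (M + M) p n := by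
  have hM : M ≠ 0 := by omega
  simp only [betaS, bhat1_eq hp hpM, upsilon_add_half hM, uSeq_add_half hM, vSeq_add_half hM,
    neg_neg]

lemma exists_upsilon_sqrt {N : ℕ} {n : ℤ}
    (h : 0 < uSeq N p (2 * n) ^ 2 + vSeq N p (2 * n) ^ 2) :
    ∃ r : ℝ, r ≠ 0 ∧ upsilon N p n ^ ((1 : ℂ) / 2) = r ∧ upsilon N p n = (r : ℂ) ^ 2 := by
  obtain ⟨s, hs, hse⟩ : ∃ s : ℝ, 0 < s ∧
      ((s : ℝ) : ℂ) = uSeq N p (2 * n) ^ 2 + vSeq N p (2 * n) ^ 2 := by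
    obtain ⟨h1, h2⟩ := Complex.pos_iff.1 h
    exact ⟨_, h1, Complex.ext (by simp) (by simpa using h2)⟩
  have hU : upsilon N p n = ((s / 4 : ℝ) : ℂ) := by
    rw [upsilon, ← hse]
    push_cast
    rfl
  refine ⟨Real.sqrt (s / 4), (Real.sqrt_pos.2 (by linarith)).ne', ?_, ?_⟩
  · rw [hU, Real.sqrt_eq_rpow, Complex.ofReal_cpow (by linarith)]
    norm_num
  · rw [hU, ← Complex.ofReal_pow, Real.sq_sqrt (by linarith)]

lemma conj_betaS (hp : 2 ≤ p) (hpM : p ≤ M) {n : ℤ}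
    (h : 0 < uSeq (M + M) p (2 * n) ^ 2 + vSeq (M + M) p (2 * n) ^ 2) :
    (starRingEnd ℂ) (betaS (M + M) p n) = betaS (M + M) p n := by
  obtain ⟨r, -, hr, -⟩ := exists_upsilon_sqrt h
  rw [betaS, hr, map_div₀, conj_bhat1 hp hpM, Complex.conj_ofReal]

lemma betaS_sq_add_sq (hp : 2 ≤ p) (hpM : p ≤ M) {n : ℤ}
    (h : 0 < uSeq (M + M) p (2 * n) ^ 2 + vSeq (M + M) p (2 * n) ^ 2) :
    betaS (M + M) p n ^ 2 + betaS (M + M) p (n + M) ^ 2 = 2 := by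
  have hM : M ≠ 0 := by omega
  obtain ⟨r, hr0, hr, hr2⟩ := exists_upsilon_sqrt h
  have hrC : (r : ℂ) ≠ 0 := by exact_mod_cast hr0
  rw [upsilon] at hr2
  simp only [betaS, bhat1_eq hp hpM, upsilon_add_half hM, uSeq_add_half hM, vSeq_add_half hM, hr]
  field_simp
  linear_combination 8 * hr2

/-- The DFT multiplier of the complementary-WP operator. -/
noncomputable def cwpMult (N n : ℕ) : ℂ :=
  if n = 0 ∨ n = N / 2 then 1 else if n < N / 2 then -Complex.I else Complex.I

lemma cwpMult_mul_conj (N n : ℕ) : cwpMult N n * (starRingEnd ℂ) (cwpMult N n) = 1 := by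
  unfold cwpMult
  split_ifs <;> simp

/-- The DFT of the wavelet packet `ψ_{[1],λ}`. -/
noncomputable def psiHat (N p lam n : ℕ) : ℂ :=
  if lam = 0 then betaS N p n else alphaS N p n

lemma cwpT_psi1 {N : ℕ} (hN : N ≠ 0) (lam : ℕ) :
    cwpT N (psi1 N p lam) = synth N (fun n => cwpMult N n * psiHat N p lam n) := by
  funext k
  rw [cwpT, synth]
  congr 1
  refine Finset.sum_congr rfl fun n hn => ?_
  have h : psi1 N p lam = synth N (psiHat N p lam) := rfl
  rw [h, dft_synth hN _ (Finset.mem_range.1 hn)]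
  rfl

lemma psiHat_orthonormal (hp : 2 ≤ p) (hpM : p ≤ M)
    (hpos : ∀ n : ℤ, 0 < uSeq (M + M) p (2 * n) ^ 2 + vSeq (M + M) p (2 * n) ^ 2)
    {lam mu : ℕ} (hl : lam < 2) (hm : mu < 2) (n : ℕ) :
    psiHat (M + M) p lam n * (starRingEnd ℂ) (psiHat (M + M) p mu n) +
      psiHat (M + M) p lam (M + n) * (starRingEnd ℂ) (psiHat (M + M) p mu (M + n)) =
    2 * if lam = mu then 1 else 0 := by
  have hM : M ≠ 0 := by omega
  have h2 : ((M + M : ℕ) : ℤ) / 2 = M := by omega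
  have hsq := betaS_sq_add_sq hp hpM (hpos n)
  have hc := conj_betaS hp hpM (hpos n)
  have hc' := conj_betaS hp hpM (hpos (n + M))
  have hcast : ((M + n : ℕ) : ℤ) = n + M := by push_cast; ring
  have hw : ww (M + M) ^ (n : ℤ) * (starRingEnd ℂ) (ww (M + M) ^ (n : ℤ)) = 1 := by
    rw [conj_ww_zpow, ← zpow_add₀ ww_ne_zero]
    simp
  have ha : psiHat (M + M) p 1 n = ww (M + M) ^ (n : ℤ) * betaS (M + M) p (n + M) := by
    rw [psiHat, if_neg one_ne_zero, alphaS, h2]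
  have ha' : psiHat (M + M) p 1 (M + n) = -(ww (M + M) ^ (n : ℤ) * betaS (M + M) p n) := by
    rw [psiHat, if_neg one_ne_zero, alphaS, h2, hcast, betaS_add_period hp hpM,
      zpow_add₀ ww_ne_zero, ww_zpow_half hM]
    ring
  have hb : psiHat (M + M) p 0 n = betaS (M + M) p n := rfl
  have hb' : psiHat (M + M) p 0 (M + n) = betaS (M + M) p (n + M) := by
    rw [psiHat, if_pos rfl, hcast]
  interval_cases lam <;> interval_cases mu <;>
    simp only [ha, ha', hb, hb', map_mul, map_neg, hc, hc', if_true, one_ne_zero, zero_ne_one,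
      if_false]
  · linear_combination hsq
  · ring
  · ring
  · linear_combination hsq +
      (betaS (M + M) p n ^ 2 + betaS (M + M) p (n + M) ^ 2) * hw

lemma inner1_cwpT_psi1 (hp : 2 ≤ p) (hpM : p ≤ M)
    (hpos : ∀ n : ℤ, 0 < uSeq (M + M) p (2 * n) ^ 2 + vSeq (M + M) p (2 * n) ^ 2)
    {lam mu : ℕ} (hl : lam < 2) (hm : mu < 2) {l m : ℕ} (hlM : l < M) (hmM : m < M) :
    inner1 (M + M) (fun k => cwpT (M + M) (psi1 (M + M) p lam) (k - 2 * (l : ℤ)))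
      (fun k => cwpT (M + M) (psi1 (M + M) p mu) (k - 2 * (m : ℤ))) =
    if lam = mu ∧ l = m then 1 else 0 := by
  have hM : M ≠ 0 := by omega
  rw [cwpT_psi1 (by omega), cwpT_psi1 (by omega),
    inner1_synth_two_shift hM _ _ (if lam = mu then 1 else 0) _ hlM hmM]
  · split_ifs <;> simp_all
  · intro n _
    simp only [map_mul]
    rw [← psiHat_orthonormal hp hpM hpos hl hm n]
    linear_combination
      (psiHat (M + M) p lam n * (starRingEnd ℂ) (psiHat (M + M) p mu n)) *
        cwpMult_mul_conj (M + M) n +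
      (psiHat (M + M) p lam (M + n) * (starRingEnd ℂ) (psiHat (M + M) p mu (M + n))) *
        cwpMult_mul_conj (M + M) (M + n)

end WaveletPackets

lemma inner1_sub_sum_left (N : ℕ) {ι : Type*} (s : Finset ι) (x : ℤ → ℂ) (c : ι → ℂ)
    (e : ι → ℤ → ℂ) (y : ℤ → ℂ) :
    inner1 N (fun k => x k - ∑ i ∈ s, c i * e i k) y =
      inner1 N x y - ∑ i ∈ s, c i * inner1 N (e i) y := by
  simp only [inner1, sub_mul, Finset.sum_sub_distrib, Finset.sum_mul, Finset.mul_sum, mul_assoc]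
  rw [Finset.sum_comm]

/-- The 2-sample shifts of the complementary wavelet packets
    φ_{[1],λ}^p = C(ψ_{[1],λ}^p) form an orthonormal basis of Π[N]; consequently the
    orthogonal projection of x onto the span of {φ_{[1],λ}^p[·−2l]} equals
    Σ_l ⟨x, φ_{[1],λ}^p[·−2l]⟩ φ_{[1],λ}^p[·−2l]. -/
theorem cwp_psi1_orthonormal_basis_and_projection (N p : ℕ) (hN : 0 < N) (hNe : Even N)
    (hp : 2 ≤ p) (hpN : p ≤ N / 2)
    (hpos : ∀ n : ℤ, 0 < uSeq N p (2 * n) ^ 2 + vSeq N p (2 * n) ^ 2) :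
    (∀ lam mu : ℕ, lam < 2 → mu < 2 → ∀ l m : ℕ, l < N / 2 → m < N / 2 →
      inner1 N (fun k => cwpT N (psi1 N p lam) (k - 2 * (l : ℤ)))
          (fun k => cwpT N (psi1 N p mu) (k - 2 * (m : ℤ)))
        = if lam = mu ∧ l = m then 1 else 0) ∧
    (∀ x : ℤ → ℂ, (∀ k : ℤ, x (k + N) = x k) → ∀ lam : ℕ, lam < 2 →
      ((fun k : ℤ => ∑ l ∈ Finset.range (N / 2),
            inner1 N x (fun j => cwpT N (psi1 N p lam) (j - 2 * (l : ℤ))) *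
              cwpT N (psi1 N p lam) (k - 2 * (l : ℤ)))
          ∈ Submodule.span ℂ
              {g : ℤ → ℂ | ∃ l : ℕ, l < N / 2 ∧
                g = fun k => cwpT N (psi1 N p lam) (k - 2 * (l : ℤ))}) ∧
      (∀ l : ℕ, l < N / 2 →
        inner1 N
          (fun k => x k - ∑ l' ∈ Finset.range (N / 2),
              inner1 N x (fun j => cwpT N (psi1 N p lam) (j - 2 * (l' : ℤ))) *
                cwpT N (psi1 N p lam) (k - 2 * (l' : ℤ)))
          (fun k => cwpT N (psi1 N p lam) (k - 2 * (l : ℤ))) = 0)) := by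
  obtain ⟨M, rfl⟩ := hNe
  have h2 : (M + M) / 2 = M := by omega
  simp only [h2] at hpN ⊢
  refine ⟨fun lam mu hl hm l m hlM hmM => inner1_cwpT_psi1 hp hpN hpos hl hm hlM hmM,
    fun x _ lam hlam => ⟨?_, fun l hl => ?_⟩⟩
  · have e : (fun k : ℤ => ∑ l ∈ Finset.range M,
        inner1 (M + M) x (fun j => cwpT (M + M) (psi1 (M + M) p lam) (j - 2 * (l : ℤ))) *
          cwpT (M + M) (psi1 (M + M) p lam) (k - 2 * (l : ℤ))) =
        ∑ l ∈ Finset.range M,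
          inner1 (M + M) x (fun j => cwpT (M + M) (psi1 (M + M) p lam) (j - 2 * (l : ℤ))) •
            fun k : ℤ => cwpT (M + M) (psi1 (M + M) p lam) (k - 2 * (l : ℤ)) := by
      funext k
      simp
    rw [e]
    exact Submodule.sum_mem _ fun l hl => Submodule.smul_mem _ _
      (Submodule.subset_span ⟨l, Finset.mem_range.1 hl, rfl⟩)
  · rw [inner1_sub_sum_left (M + M) (Finset.range M) x _
      (fun l' k => cwpT (M + M) (psi1 (M + M) p lam) (k - 2 * (l' : ℤ))),
      Finset.sum_congr rfl fun l' hl' => by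
        rw [inner1_cwpT_psi1 hp hpN hpos hlam hlam (Finset.mem_range.1 hl') hl]]
    simp [hl]

end WP
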